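/- Let G be a connected, non-bipartite (not 2-colorable) simple graph on a finite vertex type V. Then G admits a non-trivial TF-automorphism, i.e., bijections α, β : V ≃ V with α ≠ β such that for all u, v ∈ V, u and v are adjacent in G if and only if α(u) and β(v) are adjacent in G, if and only if the canonical double cover CDC(G) has an unexpected automorphism: an automorphism f of CDC(G) such that for every automorphism γ of G and every constant b : Bool, f is not equal to the map (v, i) ↦ (γ(v), xor b i). (That is, G is unstable if and only if it has a non-trivial TF-automorphism.) -/

import Mathlib

/-- The canonical double cover of a simple graph `G`. -/
def CDC {V : Type*} (G : SimpleGraph V) : SimpleGraph (V × Bool) where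
  Adj x y := G.Adj x.1 y.1 ∧ x.2 ≠ y.2
  symm := ⟨fun _ _ h => ⟨h.1.symm, h.2.symm⟩⟩
  loopless := ⟨fun _ h => h.2 rfl⟩

/-!
Sheet-preserving isomorphisms between canonical double covers are the same as pairs `(α, β)` of
bijections forming a TF-isomorphism, `α` acting on one sheet and `β` on the other. If `G` is
connected and non-bipartite then any two of its vertices are joined by walks of both parities, so
`CDC G` is connected. Hence `CDC G` has only one 2-colouring up to exchanging the colours, namely
its partition into sheets, and every automorphism either preserves or exchanges the sheets. Such an
automorphism is expected exactly when it moves both sheets by the same permutation of the vertices.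
-/

section

open SimpleGraph

variable {V W : Type*} {G : SimpleGraph V} {H : SimpleGraph W}

theorem exists_walk_odd_length_iff (hconn : G.Preconnected) (hnb : ¬ G.Colorable 2) (u v : V)
    (P : Prop) : ∃ p : G.Walk u v, Odd p.length ↔ P := by
  obtain ⟨p⟩ := hconn u v
  by_cases hp : Odd p.length ↔ P
  · exact ⟨p, hp⟩
  obtain ⟨w, c, hc⟩ : ∃ w, ∃ c : G.Walk w w, Odd c.length := by
    simpa [two_colorable_iff_forall_loop_even] using hnb
  obtain ⟨q⟩ := hconn u w
  -- The detour through the odd closed walk `c` changes the parity of `p`.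
  refine ⟨((q.append c).append q.reverse).append p, ?_⟩
  simp only [Walk.length_append, Walk.length_reverse]
  grind

theorem exists_coloring_eq_xor (hconn : G.Preconnected) (c d : G.Coloring Bool) :
    ∃ b, ∀ v, d v = xor b (c v) := by
  rcases isEmpty_or_nonempty V with _ | ⟨⟨u⟩⟩
  · exact ⟨false, isEmptyElim⟩
  refine ⟨xor (d u) (c u), fun v => ?_⟩
  obtain ⟨p⟩ := hconn u v
  have hparity : (c u ↔ c v) ↔ (d u ↔ d v) :=
    (c.even_length_iff_congr p).symm.trans (d.even_length_iff_congr p)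
  grind

/-- A two-fold isomorphism (TF-isomorphism) from `G` to `H`: a pair of bijections which together
carry the ordered adjacent pairs of `G` to those of `H`. A TF-automorphism is the case `H = G`. -/
def IsTFIso (G : SimpleGraph V) (H : SimpleGraph W) (α β : V ≃ W) : Prop :=
  ∀ u v, G.Adj u v ↔ H.Adj (α u) (β v)

namespace CDC

/-- The 2-colouring of the canonical double cover by its two sheets `V × {i}`. -/
def sheetColoring (G : SimpleGraph V) : (CDC G).Coloring Bool :=
  Coloring.mk Prod.snd fun h => h.2

theorem reachable_of_odd_length_iff {u v : V} (p : G.Walk u v) {i j : Bool}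
    (hp : Odd p.length ↔ i ≠ j) : (CDC G).Reachable (u, i) (v, j) := by
  induction p generalizing i with
  | nil =>
    obtain rfl : i = j := by simpa using hp
    rfl
  | @cons u w v huw p ih =>
    have hstep : (CDC G).Adj (u, i) (w, !i) := ⟨huw, by simp⟩
    have htail : Odd p.length ↔ (!i) ≠ j := by
      rw [Walk.length_cons, Nat.odd_add_one] at hp
      cases i <;> cases j <;> simp_all
    exact hstep.reachable.trans (ih htail)

theorem preconnected (hconn : G.Preconnected) (hnb : ¬ G.Colorable 2) :
    (CDC G).Preconnected := by
  rintro ⟨u, i⟩ ⟨v, j⟩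
  obtain ⟨p, hp⟩ := exists_walk_odd_length_iff hconn hnb u v (i ≠ j)
  exact reachable_of_odd_length_iff p hp

theorem exists_snd_apply_eq_xor (hconn : (CDC G).Preconnected) (f : CDC G ≃g CDC H) :
    ∃ b, ∀ x, (f x).2 = xor b x.2 :=
  exists_coloring_eq_xor hconn (sheetColoring G) ((sheetColoring H).comp f.toHom)

/-- The sheet-preserving isomorphism of canonical double covers given by a TF-isomorphism: `α` acts
on the sheet `false` and `β` on the sheet `true`. -/
def isoOfTFIso {α β : V ≃ W} (h : IsTFIso G H α β) : CDC G ≃g CDC H where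
  toEquiv := Equiv.prodCongrLeft fun i => cond i β α
  map_rel_iff' := by
    rintro ⟨u, _ | _⟩ ⟨v, _ | _⟩
    · simp [CDC]
    · simpa [CDC] using (h u v).symm
    · simpa [CDC, adj_comm] using (h v u).symm
    · simp [CDC]

section SheetEquiv

variable {b : Bool}

/-- The bijection on vertices by which an isomorphism of canonical double covers that permutes the
sheets (`b` tells whether it exchanges them) carries the sheet `i` to its image. -/
def sheetEquiv (f : CDC G ≃g CDC H) (hf : ∀ x, (f x).2 = xor b x.2) (i : Bool) : V ≃ W where
  toFun v := (f (v, i)).1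
  invFun w := (f.symm (w, xor b i)).1
  left_inv v := by
    have hv : ((f (v, i)).1, xor b i) = f (v, i) := Prod.ext rfl (hf (v, i)).symm
    simp [hv]
  right_inv w := by
    have hsnd : (f.symm (w, xor b i)).2 = i := by
      simpa using (hf (f.symm (w, xor b i))).symm
    have hw : ((f.symm (w, xor b i)).1, i) = f.symm (w, xor b i) := Prod.ext rfl hsnd.symm
    simp [hw]

theorem apply_eq_sheetEquiv (f : CDC G ≃g CDC H) (hf : ∀ x, (f x).2 = xor b x.2)
    (x : V × Bool) : f x = (sheetEquiv f hf x.2 x.1, xor b x.2) :=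
  Prod.ext rfl (hf x)

theorem isTFIso_sheetEquiv (f : CDC G ≃g CDC H) (hf : ∀ x, (f x).2 = xor b x.2) :
    IsTFIso G H (sheetEquiv f hf false) (sheetEquiv f hf true) := by
  intro u v
  have hadj : (CDC H).Adj (f (u, false)) (f (v, true)) ↔ (CDC G).Adj (u, false) (v, true) :=
    f.map_adj_iff
  rw [apply_eq_sheetEquiv f hf, apply_eq_sheetEquiv f hf] at hadj
  simpa [CDC] using hadj.symm

/-- The automorphisms of the canonical double cover induced by an automorphism of `G` and a
possible exchange of the sheets. The graph `G` is unstable when some automorphism is not of this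
form. -/
def IsExpected (f : CDC G ≃g CDC G) : Prop :=
  ∃ (γ : G ≃g G) (b : Bool), ⇑f = fun x => (γ x.1, xor b x.2)

theorem isExpected_iff_sheetEquiv_eq (f : CDC G ≃g CDC G) (hf : ∀ x, (f x).2 = xor b x.2) :
    IsExpected f ↔ sheetEquiv f hf false = sheetEquiv f hf true := by
  constructor
  · rintro ⟨γ, a, hγ⟩
    ext v
    simp [sheetEquiv, hγ]
  · intro heq
    have hTF := isTFIso_sheetEquiv f hf
    rw [← heq] at hTF
    refine ⟨⟨sheetEquiv f hf false, (hTF _ _).symm⟩, b, funext ?_⟩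
    rintro ⟨v, _ | _⟩
    · exact apply_eq_sheetEquiv f hf (v, false)
    · simpa [heq] using apply_eq_sheetEquiv f hf (v, true)

end SheetEquiv

theorem isExpected_isoOfTFIso_iff {α β : V ≃ V} (h : IsTFIso G G α β) :
    IsExpected (isoOfTFIso h) ↔ α = β := by
  have hsheets (x : V × Bool) : (isoOfTFIso h x).2 = xor false x.2 := (Bool.false_xor _).symm
  have hfalse : sheetEquiv (isoOfTFIso h) hsheets false = α := rfl
  have htrue : sheetEquiv (isoOfTFIso h) hsheets true = β := rfl
  rw [isExpected_iff_sheetEquiv_eq _ hsheets, hfalse, htrue]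

end CDC

end

theorem unstable_iff_nontrivial_tf_automorphism_general {V : Type*}
    (G : SimpleGraph V) (hconn : G.Preconnected) (hnb : ¬ G.Colorable 2) :
    (∃ α β : V ≃ V, α ≠ β ∧ ∀ u v : V, G.Adj u v ↔ G.Adj (α u) (β v)) ↔
      (∃ f : CDC G ≃g CDC G, ∀ (γ : G ≃g G) (b : Bool),
        ⇑f ≠ fun x : V × Bool => (γ x.1, xor b x.2)) := by
  suffices (∃ α β : V ≃ V, α ≠ β ∧ IsTFIso G G α β) ↔ ∃ f : CDC G ≃g CDC G, ¬ CDC.IsExpected f by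
    simpa only [IsTFIso, CDC.IsExpected, not_exists] using this
  constructor
  · rintro ⟨α, β, hne, h⟩
    exact ⟨CDC.isoOfTFIso h, (CDC.isExpected_isoOfTFIso_iff h).not.mpr hne⟩
  · rintro ⟨f, hunexpected⟩
    obtain ⟨b, hf⟩ := CDC.exists_snd_apply_eq_xor (CDC.preconnected hconn hnb) f
    exact ⟨CDC.sheetEquiv f hf false, CDC.sheetEquiv f hf true,
      (CDC.isExpected_iff_sheetEquiv_eq f hf).not.mp hunexpected, CDC.isTFIso_sheetEquiv f hf⟩

/-- A connected non-bipartite graph `G` has a non-trivial TF-automorphism iff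
`CDC(G)` has an unexpected automorphism, i.e. `G` is unstable iff it admits
a non-trivial TF-automorphism. -/
theorem unstable_iff_nontrivial_tf_automorphism {V : Type*} [Fintype V]
    (G : SimpleGraph V) (hconn : G.Connected) (hnb : ¬ G.Colorable 2) :
    (∃ α β : V ≃ V, α ≠ β ∧ ∀ u v : V, G.Adj u v ↔ G.Adj (α u) (β v)) ↔
      (∃ f : CDC G ≃g CDC G, ∀ (γ : G ≃g G) (b : Bool),
        ⇑f ≠ fun x : V × Bool => (γ x.1, xor b x.2)) :=
  unstable_iff_nontrivial_tf_automorphism_general G hconn.preconnected hnb
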